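/- arXiv:2006.04020 — 2 statements merged into one kernel-verified Lean document; each statement's English description precedes it below -/
import Mathlib

section
/- Fix 0 < α ≤ 2 and t > 0, let g : (0,t) → ℂ be measurable with ∫_0^t |g(τ)|² τ^α dτ < ∞, and set F := L_t^α g. Let (E_N)_{N≥1} be any increasing sequence of compact subsets of Δ_α whose union is Δ_α. Define g_N(τ) := ((α/2)^α / (Γ(α/2) (t-τ)^{α/2+1})) ∫_{E_N} conj(z) F(z) exp(-α² conj(z)^{2/α} / (4(t-τ))) dμ_α^t(z) for 0 < τ < t. Then ∫_0^t |g_N(τ) - g(τ)|² τ^α dτ → 0 as N → ∞. -/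
open MeasureTheory Filter Set Complex

/-- The open sector `Δ_α = {z ≠ 0 : |arg z| < πα/4}`. -/
def sector (α : ℝ) : Set ℂ :=
  {z : ℂ | z ≠ 0 ∧ |Complex.arg z| < Real.pi * α / 4}

/-- The complex kernel `K_α(z,s) = (α^α/(2^α Γ(α/2))) z s^{-(α/2+1)} exp(-α² z^{2/α}/(4s))`,
where `z^{2/α}` is taken with the principal branch. -/
noncomputable def Kc (α : ℝ) (z : ℂ) (s : ℝ) : ℂ :=
  ((α ^ α / (2 ^ α * Real.Gamma (α / 2)) : ℝ) : ℂ) * z * (((s ^ (-(α / 2 + 1)) : ℝ)) : ℂ) *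
    Complex.exp (-(α ^ 2 : ℂ) * z ^ (((2 / α : ℝ)) : ℂ) / (4 * (s : ℂ)))

/-- The transform `(L_t^α g)(z) = t^{-α} ∫_0^t K_α(z,t-τ) g(τ) τ^α dτ`. -/
noncomputable def Lc (α t : ℝ) (g : ℝ → ℂ) (z : ℂ) : ℂ :=
  ((t ^ (-α) : ℝ) : ℂ) *
    ∫ τ in Set.Ioo (0 : ℝ) t, Kc α z (t - τ) * g τ * ((τ ^ α : ℝ) : ℂ)

/-- The Beta function `B(a,b) = Γ(a)Γ(b)/Γ(a+b)`. -/
noncomputable def betaFn (a b : ℝ) : ℝ := Real.Gamma a * Real.Gamma b / Real.Gamma (a + b)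

/-- The density of the measure `μ_α^t` with respect to the area measure on `Δ_α`. -/
noncomputable def muDens (α t : ℝ) (z : ℂ) : ℝ :=
  (Real.pi)⁻¹ * 2 ^ (α - 1) * betaFn (α / 2) (α / 2) * ‖z‖ ^ (4 * (1 - α) / α) *
    Real.exp (α ^ 2 / (2 * t) * (z ^ (((2 / α : ℝ)) : ℂ)).re) *
      ((z ^ (((2 / α : ℝ)) : ℂ)).re) ^ (α - 1)


open scoped FourierTransform ContDiff in
lemma plancherel_aux (f : ℝ → ℂ) (h1 : Integrable f) (h2 : MemLp f 2) :
    ∫⁻ y, ‖𝓕 f y‖ₑ ^ 2 = ∫⁻ v, ‖f v‖ₑ ^ 2 := by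
  let F2 : Lp (α := ℝ) ℂ 2 := 𝓕 (h2.toLp f)
  have hcont : Continuous (𝓕 f) :=
    VectorFourier.fourierIntegral_continuous Real.continuous_fourierChar
      (by exact continuous_inner) h1
  have hae : ∀ᵐ y, F2 y = 𝓕 f y := by
    apply ae_eq_of_integral_contDiff_smul_eq
    · exact (Lp.memLp F2).locallyIntegrable (by norm_num)
    · exact hcont.locallyIntegrable
    · intro g hg hgs
      have hgc : ContDiff ℝ ∞ (fun x => (g x : ℂ)) := ofRealCLM.contDiff.comp hg
      have hgcs : HasCompactSupport (fun x => (g x : ℂ)) :=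
        hgs.comp_left (g := fun x : ℝ => (x : ℂ)) (by simp)
      let G : SchwartzMap ℝ ℂ := hgcs.toSchwartzMap hgc
      have hG : ∀ x, G x = (g x : ℂ) := fun x => rfl
      have e1 : ∫ x, g x • F2 x = ∫ x, G x • F2 x := by
        simp [hG]
      have e2 : ∫ x, g x • 𝓕 f x = ∫ x, G x • 𝓕 f x := by
        simp [hG]
      rw [e1, e2, ← Lp.toTemperedDistribution_apply,
        ← Lp.fourier_toTemperedDistribution_eq, TemperedDistribution.fourier_apply,
        Lp.toTemperedDistribution_apply]
      have := VectorFourier.integral_fourierIntegral_smul_eq_flip (V := ℝ) (W := ℝ)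
        (e := Real.fourierChar) (μ := volume) (ν := volume) (L := innerₗ ℝ)
        (f := G) (g := f) Real.continuous_fourierChar (by exact continuous_inner)
        G.integrable h1
      rw [flip_innerₗ] at this
      refine Eq.trans (integral_congr_ae ?_) this
      filter_upwards [h2.coeFn_toLp] with x hx
      rw [hx]
      rfl
  have key : ∀ u : ℝ → ℂ, ∫⁻ v, ‖u v‖ₑ ^ 2 = eLpNorm u 2 volume ^ 2 := by
    intro u
    have := eLpNorm_nnreal_pow_eq_lintegral (μ := (volume : Measure ℝ)) (f := u) (p := 2) (by norm_num)
    simpa using this.symm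
  rw [key, key, ← eLpNorm_congr_ae hae, ← eLpNorm_congr_ae h2.coeFn_toLp]
  have hn : ‖F2‖ = ‖h2.toLp f‖ := Lp.norm_fourier_eq _
  rw [Lp.norm_def, Lp.norm_def, ENNReal.toReal_eq_toReal_iff' (Lp.eLpNorm_ne_top _) (Lp.eLpNorm_ne_top _)] at hn
  rw [hn]

open scoped ComplexConjugate in
lemma abstract_inv {X Z : Type*} [MeasurableSpace X] [MeasurableSpace Z] (ν : Measure X)
    [IsFiniteMeasure ν] (μ : Measure Z) [SFinite μ] (K : Z → X → ℂ)
    (hK : Measurable (Function.uncurry K))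
    (hiso : ∀ φ : X → ℂ, Measurable φ → MemLp φ 2 ν →
      ∫⁻ z, ‖∫ x, K z x * φ x ∂ν‖ₑ ^ 2 ∂μ = ∫⁻ x, ‖φ x‖ₑ ^ 2 ∂ν)
    (g : X → ℂ) (hg : Measurable g) (hg2 : MemLp g 2 ν)
    (E : ℕ → Set Z) (hE : ∀ N, MeasurableSet (E N)) (hmono : Monotone E)
    (hun : ∀ᵐ z ∂μ, z ∈ ⋃ N, E N) (hfin : ∀ N, μ (E N) < ⊤)
    (hbd : ∀ N, ∃ C : ℝ, ∀ z ∈ E N, ∀ x, ‖K z x‖ ≤ C) :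
    Tendsto (fun N => ∫ x, ‖(∫ z in E N, conj (K z x) * (∫ x', K z x' * g x' ∂ν) ∂μ) - g x‖ ^ 2 ∂ν)
      atTop (nhds 0) := by
  have sq_int : ∀ {Y : Type _} [MeasurableSpace Y] (m : Measure Y) (u : Y → ℂ), MemLp u 2 m →
      Integrable (fun y => ‖u y‖ ^ 2) m := fun m u hu => hu.integrable_norm_pow (by norm_num)
  have sq_int' : ∀ (m : Measure Z) (u : Z → ℂ), MemLp u 2 m →
      Integrable (fun y => ‖u y‖ ^ 2) m := fun m u hu => hu.integrable_norm_pow (by norm_num)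
  have hLm : ∀ φ : X → ℂ, Measurable φ → Measurable (fun z => ∫ x, K z x * φ x ∂ν) := by
    intro φ hφ
    have : StronglyMeasurable (Function.uncurry fun z x => K z x * φ x) :=
      (hK.mul (hφ.comp measurable_snd)).stronglyMeasurable
    exact this.integral_prod_right.measurable
  have hL2 : ∀ φ : X → ℂ, Measurable φ → MemLp φ 2 ν →
      MemLp (fun z => ∫ x, K z x * φ x ∂ν) 2 μ := by
    intro φ hφ h2
    refine ⟨(hLm φ hφ).aestronglyMeasurable, ?_⟩
    have := eLpNorm_nnreal_pow_eq_lintegral (μ := μ) (f := fun z => ∫ x, K z x * φ x ∂ν) (p := 2) (by norm_num)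
    have h' := eLpNorm_nnreal_pow_eq_lintegral (μ := ν) (f := φ) (p := 2) (by norm_num)
    simp at this h'
    rw [hiso φ hφ h2, ← h'] at this
    have h3 := h2.2
    rw [lt_top_iff_ne_top] at h3 ⊢
    intro h4
    rw [h4] at this
    simp at this
    exact h3 (by simpa using this.symm)
  have hLnorm : ∀ φ : X → ℂ, Measurable φ → MemLp φ 2 ν →
      ∫ z, ‖∫ x, K z x * φ x ∂ν‖ ^ 2 ∂μ = ∫ x, ‖φ x‖ ^ 2 ∂ν := by
    intro φ hφ h2
    rw [integral_eq_lintegral_of_nonneg_ae (by exact .of_forall fun z => by positivity)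
      (sq_int' μ _ (hL2 φ hφ h2)).1,
      integral_eq_lintegral_of_nonneg_ae (by exact .of_forall fun z => by positivity)
      (sq_int ν _ h2).1]
    congr 1
    simpa [ENNReal.ofReal_pow, ofReal_norm] using hiso φ hφ h2
  set F : Z → ℂ := fun z => ∫ x, K z x * g x ∂ν with hF
  have hFm : Measurable F := hLm g hg
  have hF2 : MemLp F 2 μ := hL2 g hg hg2
  have hFsq := sq_int' μ F hF2
  have main : ∀ N, ∫ x, ‖(∫ z in E N, conj (K z x) * F z ∂μ) - g x‖ ^ 2 ∂ν ≤
      ∫ z, ‖F z‖ ^ 2 ∂μ - ∫ z in E N, ‖F z‖ ^ 2 ∂μ := by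
    intro N
    obtain ⟨C, hC⟩ := hbd N
    have : IsFiniteMeasure (μ.restrict (E N)) := ⟨by simpa using hfin N⟩
    have hFE : MemLp F 2 (μ.restrict (E N)) := hF2.restrict _
    have hFi : Integrable F (μ.restrict (E N)) := hFE.integrable (by norm_num)
    set G : X → ℂ := fun x => ∫ z in E N, conj (K z x) * F z ∂μ with hG
    have hcK : Measurable (fun p : Z × X => conj (K p.1 p.2)) :=
      Complex.continuous_conj.measurable.comp hK
    have hGm : Measurable G := by
      have : StronglyMeasurable (Function.uncurry fun z x => conj (K z x) * F z) :=
        (hcK.mul (hFm.comp measurable_fst)).stronglyMeasurable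
      exact this.integral_prod_left'.measurable
    have hGb : ∀ x, ‖G x‖ ≤ C * ∫ z in E N, ‖F z‖ ∂μ := by
      intro x
      rw [← integral_const_mul]
      refine norm_integral_le_of_norm_le (hFi.norm.const_mul C) ?_
      filter_upwards [ae_restrict_mem (hE N)] with z hz
      rw [norm_mul]
      gcongr
      simpa using hC z hz x
    have hG2 : MemLp G 2 ν := MemLp.of_bound hGm.aestronglyMeasurable _ (.of_forall hGb)
    have adj : ∀ φ : X → ℂ, Measurable φ → MemLp φ 2 ν →
        ∫ x, conj (φ x) * G x ∂ν = ∫ z in E N, conj (∫ x, K z x * φ x ∂ν) * F z ∂μ := by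
      intro φ hφ h2
      have hφi : Integrable φ ν := h2.integrable (by norm_num)
      calc ∫ x, conj (φ x) * G x ∂ν
          = ∫ x, ∫ z in E N, conj (φ x) * (conj (K z x) * F z) ∂μ ∂ν := by
            simp_rw [hG, integral_const_mul]
        _ = ∫ z in E N, ∫ x, conj (φ x) * (conj (K z x) * F z) ∂ν ∂μ := by
            apply integral_integral_swap
            have hb : Integrable (fun p : X × Z => C * (‖φ p.1‖ * ‖F p.2‖)) (ν.prod (μ.restrict (E N))) :=
              (hφi.norm.mul_prod hFi.norm).const_mul C
            refine hb.mono' ?_ ?_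
            · apply Measurable.aestronglyMeasurable
              have m1 : Measurable (fun p : X × Z => conj (φ p.1)) :=
                Complex.continuous_conj.measurable.comp (hφ.comp measurable_fst)
              have m2 : Measurable (fun p : X × Z => conj (K p.2 p.1)) := hcK.comp measurable_swap
              exact m1.mul (m2.mul (hFm.comp measurable_snd))
            · have : ∀ᵐ p ∂(ν.prod (μ.restrict (E N))), p.2 ∈ E N :=
                Measure.quasiMeasurePreserving_snd.ae (ae_restrict_mem (hE N))
              filter_upwards [this] with p hp
              have := hC p.2 hp p.1
              simp only [Function.uncurry, norm_mul, RCLike.norm_conj]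
              calc ‖φ p.1‖ * (‖K p.2 p.1‖ * ‖F p.2‖) ≤ ‖φ p.1‖ * (C * ‖F p.2‖) := by gcongr
                _ = _ := by ring
        _ = _ := by
            congr 1
            ext z
            rw [← integral_conj, ← integral_mul_const]
            congr 1
            ext x
            simp only [map_mul]
            ring
    have hGsq := sq_int ν G hG2
    have hgsq := sq_int ν g hg2
    have hFEsq := sq_int' _ F hFE
    have i1 : ∫ x, conj (g x) * G x ∂ν = ((∫ z in E N, ‖F z‖ ^ 2 ∂μ : ℝ) : ℂ) := by
      rw [adj g hg hg2, ← integral_complex_ofReal]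
      congr 1
      ext z
      change conj (F z) * F z = _
      rw [Complex.conj_mul']
      push_cast; rfl
    have i2 : ∫ x, ‖G x‖ ^ 2 ∂ν ≤ ∫ z in E N, ‖F z‖ ^ 2 ∂μ := by
      have e := adj G hGm hG2
      have e0 : ∫ x, conj (G x) * G x ∂ν = ((∫ x, ‖G x‖ ^ 2 ∂ν : ℝ) : ℂ) := by
        rw [← integral_complex_ofReal]
        congr 1
        ext z
        rw [Complex.conj_mul']
        push_cast; rfl
      rw [e0] at e
      have hLG := hL2 G hGm hG2
      have hLGsq := sq_int' μ _ hLG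
      have e2 : ‖∫ z in E N, conj (∫ x, K z x * G x ∂ν) * F z ∂μ‖ ≤
          ∫ z in E N, (1/2) * (‖∫ x, K z x * G x ∂ν‖ ^ 2 + ‖F z‖ ^ 2) ∂μ := by
        refine norm_integral_le_of_norm_le ((hLGsq.restrict.add hFEsq).const_mul _) ?_
        refine .of_forall fun z => ?_
        rw [norm_mul, RCLike.norm_conj]
        nlinarith [sq_nonneg (‖∫ x, K z x * G x ∂ν‖ - ‖F z‖)]
      rw [← e, integral_const_mul, integral_add hLGsq.restrict hFEsq, Complex.norm_real] at e2
      have e3 : ∫ z in E N, ‖∫ x, K z x * G x ∂ν‖ ^ 2 ∂μ ≤ ∫ x, ‖G x‖ ^ 2 ∂ν := by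
        rw [← hLnorm G hGm hG2]
        exact setIntegral_le_integral hLGsq (.of_forall fun z => by positivity)
      have := Real.le_norm_self (∫ x, ‖G x‖ ^ 2 ∂ν)
      linarith
    have i3 : ∫ x, ‖G x - g x‖ ^ 2 ∂ν = ∫ x, ‖G x‖ ^ 2 ∂ν + ∫ x, ‖g x‖ ^ 2 ∂ν
        - 2 * ∫ x, (conj (g x) * G x).re ∂ν := by
      have hmi : Integrable (fun x => (conj (g x) * G x)) ν := by
        refine (hGsq.add hgsq).mono' ?_ (.of_forall fun x => ?_)
        · exact ((Complex.continuous_conj.measurable.comp hg).mul hGm).aestronglyMeasurable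
        · rw [norm_mul, RCLike.norm_conj, Pi.add_apply]
          nlinarith [sq_nonneg (‖g x‖ - ‖G x‖), sq_nonneg (‖g x‖), sq_nonneg ‖G x‖]
      have hmr : Integrable (fun x => (conj (g x) * G x).re) ν := hmi.re
      rw [← integral_const_mul, ← integral_add hGsq hgsq, ← integral_sub (by exact hGsq.add hgsq) (hmr.const_mul 2)]
      congr 1
      ext x
      simp only [← Complex.normSq_eq_norm_sq, Complex.normSq_apply, sub_re, sub_im, mul_re, conj_re, conj_im, Pi.add_apply]
      ring
    have i4 : ∫ x, (conj (g x) * G x).re ∂ν = ∫ z in E N, ‖F z‖ ^ 2 ∂μ := by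
      have hmi : Integrable (fun x => (conj (g x) * G x)) ν := by
        refine (hGsq.add hgsq).mono' ?_ (.of_forall fun x => ?_)
        · exact ((Complex.continuous_conj.measurable.comp hg).mul hGm).aestronglyMeasurable
        · rw [norm_mul, RCLike.norm_conj, Pi.add_apply]
          nlinarith [sq_nonneg (‖g x‖ - ‖G x‖), sq_nonneg (‖g x‖), sq_nonneg ‖G x‖]
      have := congrArg Complex.re i1
      rw [ofReal_re] at this
      rw [← this]
      exact integral_re hmi
    rw [i3, i4, ← hLnorm g hg hg2]
    linarith
  have lim : Tendsto (fun N => ∫ z, ‖F z‖ ^ 2 ∂μ - ∫ z in E N, ‖F z‖ ^ 2 ∂μ) atTop (nhds 0) := by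
    have h1 := tendsto_setIntegral_of_monotone hE hmono hFsq.integrableOn
    have h2 : ∫ z in ⋃ N, E N, ‖F z‖ ^ 2 ∂μ = ∫ z, ‖F z‖ ^ 2 ∂μ := by
      rw [Measure.restrict_eq_self_of_ae_mem hun]
    rw [h2] at h1
    have h3 := h1.const_sub (∫ z, ‖F z‖ ^ 2 ∂μ)
    rwa [sub_self] at h3
  exact squeeze_zero (fun N => integral_nonneg fun x => by positivity) main lim

lemma rpow_le_exp_aux {p b y : ℝ} (hp : 0 < p) (hb : 0 < b) (hy : 0 < y) :
    y ^ p ≤ (p / b) ^ p * Real.exp (b * y) := by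
  have h1 : y ≤ (p / b) * Real.exp (b * y / p) := by
    have := Real.add_one_le_exp (b * y / p)
    calc y = (p / b) * (b * y / p) := by field_simp
      _ ≤ _ := by
        gcongr
        linarith
  calc y ^ p ≤ ((p / b) * Real.exp (b * y / p)) ^ p := by gcongr
    _ = _ := by
      rw [Real.mul_rpow (by positivity) (by positivity), ← Real.exp_mul]
      congr 2
      field_simp

lemma slice_mem (α v0 x : ℝ) (hα : 0 < α) (hx : 0 < x) (h : ℝ → ℂ) (hm : Measurable h)
    (hi : IntegrableOn (fun v => ‖h v‖ ^ 2 * (v - v0) ^ (-α)) (Ioi v0)) :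
    Integrable ((Ioi v0).indicator fun v => h v * ((Real.exp (-(2 * Real.pi * x * v)) : ℝ) : ℂ)) ∧
    MemLp ((Ioi v0).indicator fun v => h v * ((Real.exp (-(2 * Real.pi * x * v)) : ℝ) : ℂ)) 2 := by
  have hpi := Real.pi_pos
  have mf : Measurable fun v => h v * ((Real.exp (-(2 * Real.pi * x * v)) : ℝ) : ℂ) := by
    fun_prop
  have key : ∀ v ∈ Ioi v0, (v - v0) ^ α * Real.exp (-(4 * Real.pi * x * (v - v0))) ≤
      (α / (4 * Real.pi * x)) ^ α := by
    intro v hv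
    have hv' : 0 < v - v0 := sub_pos.mpr hv
    have := rpow_le_exp_aux hα (by positivity : 0 < 4 * Real.pi * x) hv'
    rw [Real.exp_neg, ← div_eq_mul_inv, div_le_iff₀ (by positivity)]
    exact this
  have hexp : ∀ v, Real.exp (-(2 * Real.pi * x * v)) ^ 2 =
      Real.exp (-(4 * Real.pi * x * v0)) * Real.exp (-(4 * Real.pi * x * (v - v0))) := by
    intro v
    rw [← Real.exp_add, ← Real.exp_nat_mul]
    congr 1
    push_cast
    ring
  have hone : ∀ v ∈ Ioi v0, (v - v0) ^ (-α) * (v - v0) ^ α = 1 := by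
    intro v hv
    have hv' : 0 < v - v0 := sub_pos.mpr hv
    rw [← Real.rpow_add hv']
    simp
  have hg : IntegrableOn (fun v => (v - v0) ^ α * Real.exp (-(4 * Real.pi * x * (v - v0)))) (Ioi v0) := by
    have h1 : IntegrableOn (fun y : ℝ => y ^ α * Real.exp (-(4 * Real.pi * x) * y ^ (1:ℝ))) (Ioi 0) :=
      integrableOn_rpow_mul_exp_neg_mul_rpow (by linarith) (by norm_num) (by positivity)
    have h2 := (measurePreserving_sub_right volume v0).integrableOn_comp_preimage
      (MeasurableEquiv.subRight v0).measurableEmbedding (f := fun y : ℝ => y ^ α * Real.exp (-(4 * Real.pi * x) * y ^ (1:ℝ))) (s := Ioi 0)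
    have h3 := h2.2 h1
    have hs : (fun x => x - v0) ⁻¹' Ioi 0 = Ioi v0 := by ext; simp
    rw [hs] at h3
    refine h3.congr_fun (fun v _ => ?_) measurableSet_Ioi
    simp [Function.comp]
  constructor
  · rw [integrable_indicator_iff measurableSet_Ioi]
    refine Integrable.mono' (hi.add (hg.const_mul (Real.exp (-(4 * Real.pi * x * v0)))))
      mf.aestronglyMeasurable ?_
    filter_upwards [ae_restrict_mem measurableSet_Ioi] with v hv
    have hv' : 0 < v - v0 := sub_pos.mpr hv
    rw [norm_mul, Complex.norm_real, Real.norm_of_nonneg (Real.exp_nonneg _)]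
    simp only [Pi.add_apply]
    have e1 := hexp v
    have e2 : (v - v0) ^ (-α) = ((v - v0) ^ (-α / 2)) ^ 2 := by
      rw [← Real.rpow_mul_natCast hv'.le]; congr 1; push_cast; ring
    have e3 : (v - v0) ^ α = ((v - v0) ^ (α / 2)) ^ 2 := by
      rw [← Real.rpow_mul_natCast hv'.le]; congr 1; push_cast; ring
    have e4 : (v - v0) ^ (-α / 2) * (v - v0) ^ (α / 2) = 1 := by
      rw [← Real.rpow_add hv']
      ring_nf
      simp
    have e5 : ‖h v‖ * Real.exp (-(2 * Real.pi * x * v)) = (‖h v‖ * (v - v0) ^ (-α / 2)) * ((v - v0) ^ (α / 2) * Real.exp (-(2 * Real.pi * x * v))) := by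
      linear_combination (-‖h v‖ * Real.exp (-(2 * Real.pi * x * v))) * e4
    have e6 : Real.exp (-(4 * Real.pi * x * v0)) * ((v - v0) ^ α * Real.exp (-(4 * Real.pi * x * (v - v0)))) = ((v - v0) ^ (α / 2) * Real.exp (-(2 * Real.pi * x * v))) ^ 2 := by
      rw [e3, mul_pow, e1]; ring
    rw [e6, e2, e5, ← mul_pow]
    nlinarith [sq_nonneg ((‖h v‖ * (v - v0) ^ (-α / 2)) - ((v - v0) ^ (α / 2) * Real.exp (-(2 * Real.pi * x * v)))), sq_nonneg ((‖h v‖ * (v - v0) ^ (-α / 2))), sq_nonneg ((v - v0) ^ (α / 2) * Real.exp (-(2 * Real.pi * x * v)))]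
  · rw [memLp_indicator_iff_restrict measurableSet_Ioi, memLp_two_iff_integrable_sq_norm mf.aestronglyMeasurable]
    refine Integrable.mono' (hi.const_mul (Real.exp (-(4 * Real.pi * x * v0)) * (α / (4 * Real.pi * x)) ^ α))
      (by fun_prop) ?_
    filter_upwards [ae_restrict_mem measurableSet_Ioi] with v hv
    have hv' : 0 < v - v0 := sub_pos.mpr hv
    rw [Real.norm_of_nonneg (by positivity), norm_mul, Complex.norm_real, Real.norm_of_nonneg (Real.exp_nonneg _), mul_pow, hexp]
    calc ‖h v‖ ^ 2 * (Real.exp (-(4 * Real.pi * x * v0)) * Real.exp (-(4 * Real.pi * x * (v - v0))))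
        = ‖h v‖ ^ 2 * (v - v0) ^ (-α) * Real.exp (-(4 * Real.pi * x * v0)) * ((v - v0) ^ α * Real.exp (-(4 * Real.pi * x * (v - v0)))) := by
          linear_combination (-‖h v‖ ^ 2 * (Real.exp (-(4 * Real.pi * x * v0)) * Real.exp (-(4 * Real.pi * x * (v - v0))))) * hone v hv
      _ ≤ ‖h v‖ ^ 2 * (v - v0) ^ (-α) * Real.exp (-(4 * Real.pi * x * v0)) * (α / (4 * Real.pi * x)) ^ α := by
          gcongr
          exact key v hv
      _ = _ := by ring

open scoped FourierTransform in
lemma slice_planch (α v0 x : ℝ) (hα : 0 < α) (hx : 0 < x) (h : ℝ → ℂ) (hm : Measurable h)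
    (hi : IntegrableOn (fun v => ‖h v‖ ^ 2 * (v - v0) ^ (-α)) (Ioi v0)) :
    ∫⁻ y : ℝ, ‖∫ v in Ioi v0, h v * Complex.exp (-(2 * Real.pi * v * (x + y * I)))‖ₑ ^ 2 =
    ∫⁻ v in Ioi v0, ‖h v‖ₑ ^ 2 * ENNReal.ofReal (Real.exp (-(4 * Real.pi * x * v))) := by
  obtain ⟨h1, h2⟩ := slice_mem α v0 x hα hx h hm hi
  have := plancherel_aux _ h1 h2
  have e1 : ∀ y : ℝ, 𝓕 ((Ioi v0).indicator fun v => h v * ((Real.exp (-(2 * Real.pi * x * v)) : ℝ) : ℂ)) y =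
      ∫ v in Ioi v0, h v * Complex.exp (-(2 * Real.pi * v * (x + y * I))) := by
    intro y
    rw [Real.fourier_real_eq_integral_exp_smul, ← integral_indicator measurableSet_Ioi]
    congr 1
    ext v
    by_cases hv : v ∈ Ioi v0
    · simp only [indicator_of_mem hv, smul_eq_mul]
      rw [mul_comm, mul_assoc]
      congr 1
      rw [ofReal_exp, ← Complex.exp_add]
      congr 1
      push_cast
      ring
    · simp [indicator_of_notMem hv]
  simp_rw [e1] at this
  rw [this, ← lintegral_indicator measurableSet_Ioi]
  congr 1
  ext v
  by_cases hv : v ∈ Ioi v0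
  · simp only [indicator_of_mem hv]
    rw [enorm_mul, mul_pow]
    congr 1
    rw [← ofReal_norm, Complex.norm_real, Real.norm_of_nonneg (Real.exp_nonneg _), ← ENNReal.ofReal_pow (Real.exp_nonneg _)]
    congr 1
    rw [← Real.exp_nat_mul]
    congr 1
    push_cast
    ring
  · simp [indicator_of_notMem hv]

lemma gamma_lint (α r : ℝ) (hα : 0 < α) (hr : 0 < r) :
    ∫⁻ x in Ioi (0:ℝ), ENNReal.ofReal (x ^ (α - 1) * Real.exp (-(r * x))) =
      ENNReal.ofReal ((1 / r) ^ α * Real.Gamma α) := by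
  rw [← Real.integral_rpow_mul_exp_neg_mul_Ioi hα hr, ofReal_integral_eq_lintegral_ofReal]
  · have := integrableOn_rpow_mul_exp_neg_mul_rpow (s := α - 1) (p := 1) (b := r) (by linarith) (by norm_num) hr
    simpa [IntegrableOn] using this
  · filter_upwards [ae_restrict_mem measurableSet_Ioi] with x hx
    have : 0 < x := hx
    positivity

lemma halfplane_planch (α v0 : ℝ) (hα : 0 < α) (h : ℝ → ℂ) (hm : Measurable h)
    (hi : IntegrableOn (fun v => ‖h v‖ ^ 2 * (v - v0) ^ (-α)) (Ioi v0)) :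
    ∫⁻ w in {w : ℂ | 0 < w.re}, ‖∫ v in Ioi v0, h v * Complex.exp (-(2 * Real.pi * v * w))‖ₑ ^ 2 *
      ENNReal.ofReal (Real.exp (4 * Real.pi * v0 * w.re) * w.re ^ (α - 1)) =
    ∫⁻ v in Ioi v0, ‖h v‖ₑ ^ 2 * ENNReal.ofReal (Real.Gamma α * (4 * Real.pi * (v - v0)) ^ (-α)) := by
  have hpi := Real.pi_pos
  have hHm : Measurable (fun w : ℂ => ∫ v in Ioi v0, h v * Complex.exp (-(2 * Real.pi * v * w))) := by
    have : StronglyMeasurable (Function.uncurry fun (w : ℂ) (v : ℝ) => h v * Complex.exp (-(2 * Real.pi * v * w))) := by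
      apply Measurable.stronglyMeasurable
      simp only [Function.uncurry_def]
      fun_prop
    exact this.integral_prod_right.measurable
  have hSm : MeasurableSet {w : ℂ | 0 < w.re} := measurableSet_lt measurable_const measurable_re
  set Φ : ℂ → ENNReal := fun w => ‖∫ v in Ioi v0, h v * Complex.exp (-(2 * Real.pi * v * w))‖ₑ ^ 2 *
      ENNReal.ofReal (Real.exp (4 * Real.pi * v0 * w.re) * w.re ^ (α - 1)) with hΦ
  have hΦm : Measurable Φ := by
    have m1 : Measurable fun w : ℂ => ENNReal.ofReal (Real.exp (4 * Real.pi * v0 * w.re) * w.re ^ (α - 1)) := by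
      fun_prop
    exact ((hHm.enorm).pow_const 2).mul m1
  rw [← lintegral_indicator hSm, ← (Complex.volume_preserving_equiv_real_prod.symm).lintegral_comp
    (hΦm.indicator hSm), Measure.volume_eq_prod, lintegral_prod _ (by
      exact ((hΦm.indicator hSm).comp (MeasurableEquiv.measurable _)).aemeasurable)]
  have e1 : ∀ x : ℝ, ∫⁻ y : ℝ, ({w : ℂ | 0 < w.re}.indicator Φ) (Complex.measurableEquivRealProd.symm (x, y)) =
      (Ioi (0:ℝ)).indicator (fun x => ∫⁻ v in Ioi v0, ‖h v‖ₑ ^ 2 * ENNReal.ofReal (x ^ (α - 1) * Real.exp (-(4 * Real.pi * (v - v0) * x)))) x := by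
    intro x
    by_cases hx : x ∈ Ioi (0:ℝ)
    · have hx' : 0 < x := hx
      rw [indicator_of_mem hx]
      have : ∀ y : ℝ, ({w : ℂ | 0 < w.re}.indicator Φ) (Complex.measurableEquivRealProd.symm (x, y)) =
          ‖∫ v in Ioi v0, h v * Complex.exp (-(2 * Real.pi * v * (x + y * I)))‖ₑ ^ 2 * ENNReal.ofReal (Real.exp (4 * Real.pi * v0 * x) * x ^ (α - 1)) := by
        intro y
        have hw : Complex.measurableEquivRealProd.symm (x, y) = x + y * I := by
          apply Complex.ext <;> simp [Complex.measurableEquivRealProd_symm_apply]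
        rw [hw, indicator_of_mem (by simpa using hx')]
        simp [hΦ]
      simp_rw [this]
      rw [lintegral_mul_const', slice_planch α v0 x hα hx' h hm hi, ← lintegral_mul_const']
      · congr 1
        ext v
        rw [mul_assoc, ← ENNReal.ofReal_mul (Real.exp_nonneg _)]
        congr 2
        rw [← mul_assoc, ← Real.exp_add, mul_comm]
        congr 2
        ring
      · exact ENNReal.ofReal_ne_top
      · exact ENNReal.ofReal_ne_top
    · have hx' : ¬ 0 < x := hx
      rw [indicator_of_notMem hx]
      have : ∀ y : ℝ, ({w : ℂ | 0 < w.re}.indicator Φ) (Complex.measurableEquivRealProd.symm (x, y)) = 0 := by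
        intro y
        rw [indicator_of_notMem]
        simpa [Complex.measurableEquivRealProd_symm_apply] using hx'
      simp_rw [this]
      simp
  simp_rw [e1]
  rw [lintegral_indicator measurableSet_Ioi, lintegral_lintegral_swap]
  · apply setLIntegral_congr_fun measurableSet_Ioi
    intro v hv
    have hv' : 0 < v - v0 := sub_pos.mpr hv
    simp only
    rw [lintegral_const_mul' _ _ (by simp), gamma_lint α _ hα (by positivity)]
    congr 2
    rw [mul_comm, one_div, Real.inv_rpow (by positivity), Real.rpow_neg (by positivity)]
  · apply Measurable.aemeasurable
    simp only [Function.uncurry_def]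
    fun_prop

/-- substitution map -/
noncomputable def Tm (α t v : ℝ) : ℝ := t - α ^ 2 / (8 * Real.pi * v)

noncomputable def Tm' (α v : ℝ) : ℝ := α ^ 2 / (8 * Real.pi * v ^ 2)

noncomputable def v0c (α t : ℝ) : ℝ := α ^ 2 / (8 * Real.pi * t)

noncomputable def Cc (α : ℝ) : ℝ := α ^ α / (2 ^ α * Real.Gamma (α / 2))

noncomputable def hh (α t : ℝ) (φ : ℝ → ℂ) (v : ℝ) : ℂ :=
  ((Tm' α v * (Cc α * (t - Tm α t v) ^ (-(α / 2 + 1)) * (Tm α t v) ^ α) : ℝ) : ℂ) * φ (Tm α t v)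

lemma v0c_pos {α t : ℝ} (hα : 0 < α) (ht : 0 < t) : 0 < v0c α t := by
  have := Real.pi_pos
  unfold v0c; positivity

lemma Tm_mem {α t v : ℝ} (hα : 0 < α) (ht : 0 < t) (hv : v ∈ Ioi (v0c α t)) :
    Tm α t v ∈ Ioo 0 t := by
  have := Real.pi_pos
  have h0 := v0c_pos hα ht
  have hv1 : v0c α t < v := hv
  have hv' : 0 < v := h0.trans hv
  unfold Tm
  unfold v0c at hv1
  rw [div_lt_iff₀ (by positivity)] at hv1
  constructor
  · rw [sub_pos, div_lt_iff₀ (by positivity)]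
    linarith
  · have : 0 < α ^ 2 / (8 * Real.pi * v) := by positivity
    linarith

lemma Tm_image {α t : ℝ} (hα : 0 < α) (ht : 0 < t) : Tm α t '' Ioi (v0c α t) = Ioo 0 t := by
  have hpi := Real.pi_pos
  apply Subset.antisymm
  · rintro _ ⟨v, hv, rfl⟩
    exact Tm_mem hα ht hv
  · rintro τ ⟨h1, h2⟩
    have hs : 0 < t - τ := sub_pos.mpr h2
    refine ⟨α ^ 2 / (8 * Real.pi * (t - τ)), ?_, ?_⟩
    · unfold v0c
      rw [mem_Ioi]
      apply div_lt_div_of_pos_left (by positivity) (by positivity)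
      gcongr
      linarith
    · unfold Tm
      field_simp
      ring

lemma Tm_deriv {α t : ℝ} (hα : 0 < α) (ht : 0 < t) :
    ∀ v ∈ Ioi (v0c α t), HasDerivWithinAt (Tm α t) (Tm' α v) (Ioi (v0c α t)) v := by
  intro v hv
  have hpi := Real.pi_pos
  have hv' : 0 < v := (v0c_pos hα ht).trans hv
  have h1 : HasDerivAt (fun v : ℝ => t - α ^ 2 / (8 * Real.pi) * v⁻¹) (-(α ^ 2 / (8 * Real.pi) * (-(v ^ 2)⁻¹))) v :=
    ((hasDerivAt_inv hv'.ne').const_mul _).const_sub t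
  have h2 : HasDerivAt (Tm α t) (Tm' α v) v := by
    convert! h1 using 1
    · ext v
      unfold Tm
      rw [← div_div, div_eq_mul_inv (α ^ 2 / (8 * Real.pi))]
    · unfold Tm'
      field_simp
  exact h2.hasDerivWithinAt

lemma Tm_inj {α t : ℝ} (hα : 0 < α) (ht : 0 < t) : InjOn (Tm α t) (Ioi (v0c α t)) := by
  intro v hv u hu h
  have hpi := Real.pi_pos
  have hv' : 0 < v := (v0c_pos hα ht).trans hv
  have hu' : 0 < u := (v0c_pos hα ht).trans hu
  unfold Tm at h
  have h : α ^ 2 / (8 * Real.pi * v) = α ^ 2 / (8 * Real.pi * u) := by linarith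
  rw [div_eq_div_iff (by positivity) (by positivity)] at h
  have : (α ^ 2 * (8 * Real.pi)) * u = (α ^ 2 * (8 * Real.pi)) * v := by linarith
  exact (mul_left_cancel₀ (by positivity) this).symm

lemma Tm'_pos {α t v : ℝ} (hα : 0 < α) (ht : 0 < t) (hv : v ∈ Ioi (v0c α t)) : 0 < Tm' α v := by
  have hpi := Real.pi_pos
  have hv' : 0 < v := (v0c_pos hα ht).trans hv
  unfold Tm'; positivity

lemma hh_meas (α t : ℝ) (φ : ℝ → ℂ) (hφ : Measurable φ) : Measurable (hh α t φ) := by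
  have : Measurable (Tm α t) := by unfold Tm; fun_prop
  have : Measurable (Tm' α) := by unfold Tm'; fun_prop
  unfold hh
  fun_prop

lemma Lc_eq (α t : ℝ) (hα : 0 < α) (ht : 0 < t) (φ : ℝ → ℂ) (z : ℂ) :
    Lc α t φ z = ((t ^ (-α) : ℝ) : ℂ) * z * ∫ v in Ioi (v0c α t), hh α t φ v *
      Complex.exp (-(2 * Real.pi * v * z ^ (((2 / α : ℝ)) : ℂ))) := by
  unfold Lc
  rw [← Tm_image hα ht, integral_image_eq_integral_abs_deriv_smul measurableSet_Ioi (Tm_deriv hα ht)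
    (Tm_inj hα ht), mul_assoc]
  congr 1
  rw [← integral_const_mul]
  apply setIntegral_congr_fun measurableSet_Ioi
  intro v hv
  have hpi := Real.pi_pos
  have hv' : 0 < v := (v0c_pos hα ht).trans hv
  have h1 : (-(α ^ 2 : ℂ) * z ^ (((2 / α : ℝ)) : ℂ) / (4 * ((t - Tm α t v : ℝ) : ℂ))) =
      (-(2 * Real.pi * v * z ^ (((2 / α : ℝ)) : ℂ))) := by
    have : t - Tm α t v = α ^ 2 / (8 * Real.pi * v) := by unfold Tm; ring
    rw [this]
    have a1 : (α : ℂ) ≠ 0 := by exact_mod_cast hα.ne'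
    have a2 : (v : ℂ) ≠ 0 := by exact_mod_cast hv'.ne'
    have a3 : (Real.pi : ℂ) ≠ 0 := by exact_mod_cast hpi.ne'
    push_cast
    field_simp
    ring
  simp only [Kc, hh, h1, abs_of_pos (Tm'_pos hα ht hv), Complex.real_smul]
  unfold Cc
  push_cast
  ring

noncomputable def Dc (α t : ℝ) : ℝ :=
  (8 * Real.pi / α ^ 2) * Cc α ^ 2 * (α ^ 2 / (8 * Real.pi)) ^ (-α) * t ^ α

lemma hh_norm (α t : ℝ) (hα : 0 < α) (ht : 0 < t) (φ : ℝ → ℂ) (v : ℝ) (hv : v ∈ Ioi (v0c α t)) :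
    ‖hh α t φ v‖ ^ 2 * (v - v0c α t) ^ (-α) =
      Tm' α v * (Dc α t * (‖φ (Tm α t v)‖ ^ 2 * (Tm α t v) ^ α)) := by
  have hpi := Real.pi_pos
  have hv' : 0 < v := (v0c_pos hα ht).trans hv
  obtain ⟨hτ, hτt⟩ := Tm_mem hα ht hv
  set τ := Tm α t v with hτd
  have hs : 0 < t - τ := sub_pos.mpr hτt
  set s := t - τ with hsd
  have hsv : s = α ^ 2 / (8 * Real.pi * v) := by rw [hsd, hτd]; unfold Tm; ring
  have hvs : v = α ^ 2 / (8 * Real.pi * s) := by rw [hsv]; field_simp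
  have hT' : Tm' α v = 8 * Real.pi * s ^ 2 / α ^ 2 := by
    unfold Tm'; rw [hvs]; field_simp
  have hd : v - v0c α t = (α ^ 2 / (8 * Real.pi)) * (τ / (t * s)) := by
    rw [hvs]; unfold v0c; field_simp; rw [hsd]; ring
  have r1 : (s ^ (-(α / 2 + 1))) ^ 2 = s ^ (-α) / s ^ 2 := by
    rw [← Real.rpow_mul_natCast hs.le, ← Real.rpow_natCast s 2, ← Real.rpow_sub hs]
    congr 1; push_cast; ring
  have r2 : (τ / (t * s)) ^ (-α) = τ ^ (-α) * t ^ α * s ^ α := by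
    rw [Real.div_rpow hτ.le (by positivity), Real.mul_rpow ht.le hs.le, Real.rpow_neg ht.le, Real.rpow_neg hs.le]
    field_simp
  have r3 : τ ^ (-α) * τ ^ α = 1 := by rw [← Real.rpow_add hτ]; simp
  have r4 : s ^ (-α) * s ^ α = 1 := by rw [← Real.rpow_add hs]; simp
  unfold hh
  rw [norm_mul, Complex.norm_real, mul_pow, Real.norm_eq_abs, sq_abs, hd, Real.mul_rpow (by positivity) (by positivity),
    r2, ← hτd, ← hsd, mul_pow, mul_pow, mul_pow, r1, hT']
  unfold Dc
  have hτa : τ ^ (-α) = (τ ^ α)⁻¹ := Real.rpow_neg hτ.le _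
  have hsa : s ^ (-α) = (s ^ α)⁻¹ := Real.rpow_neg hs.le _
  rw [hτa, hsa]
  have p1 : 0 < τ ^ α := by positivity
  have p2 : 0 < s ^ α := by positivity
  generalize (α ^ 2 / (8 * Real.pi)) ^ (-α) = Q
  field_simp

lemma hh_int (α t : ℝ) (hα : 0 < α) (ht : 0 < t) (φ : ℝ → ℂ)
    (hint : IntegrableOn (fun τ => ‖φ τ‖ ^ 2 * τ ^ α) (Set.Ioo 0 t)) :
    IntegrableOn (fun v => ‖hh α t φ v‖ ^ 2 * (v - v0c α t) ^ (-α)) (Ioi (v0c α t)) := by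
  rw [← Tm_image hα ht] at hint
  have := (integrableOn_image_iff_integrableOn_abs_deriv_smul measurableSet_Ioi (Tm_deriv hα ht)
    (Tm_inj hα ht) _).1 hint
  have h2 : IntegrableOn _ (Ioi (v0c α t)) := this.const_mul (Dc α t)
  refine h2.congr_fun (fun v hv => ?_) measurableSet_Ioi
  simp only
  rw [hh_norm α t hα ht φ v hv, abs_of_pos (Tm'_pos hα ht hv), smul_eq_mul]
  ring

lemma Dc_nonneg {α t : ℝ} (hα : 0 < α) (ht : 0 < t) : 0 ≤ Dc α t := by
  have hpi := Real.pi_pos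
  unfold Dc
  positivity

lemma hh_lint (α t : ℝ) (hα : 0 < α) (ht : 0 < t) (φ : ℝ → ℂ) :
    ∫⁻ v in Ioi (v0c α t), ‖hh α t φ v‖ₑ ^ 2 * ENNReal.ofReal (Real.Gamma α * (4 * Real.pi * (v - v0c α t)) ^ (-α)) =
    ENNReal.ofReal (Real.Gamma α * (4 * Real.pi) ^ (-α) * Dc α t) *
      ∫⁻ τ in Ioo 0 t, ‖φ τ‖ₑ ^ 2 * ENNReal.ofReal (τ ^ α) := by
  have hpi := Real.pi_pos
  have hG := Real.Gamma_pos_of_pos hα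
  have hD := Dc_nonneg hα ht
  rw [← Tm_image hα ht, lintegral_image_eq_lintegral_abs_deriv_mul measurableSet_Ioi (Tm_deriv hα ht)
    (Tm_inj hα ht), ← lintegral_const_mul' _ _ ENNReal.ofReal_ne_top]
  apply setLIntegral_congr_fun measurableSet_Ioi
  intro v hv
  have hvv : 0 < v - v0c α t := sub_pos.mpr hv
  have hτ := (Tm_mem hα ht hv).1
  have hT := Tm'_pos hα ht hv
  simp only
  rw [← ofReal_norm, ← ofReal_norm, ← ENNReal.ofReal_pow (norm_nonneg _), ← ENNReal.ofReal_pow (norm_nonneg _),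
    ← ENNReal.ofReal_mul (by positivity), ← ENNReal.ofReal_mul (by positivity), ← ENNReal.ofReal_mul (by positivity),
    ← ENNReal.ofReal_mul (by positivity)]
  congr 1
  rw [abs_of_pos hT, Real.mul_rpow (by positivity) hvv.le]
  have := hh_norm α t hα ht φ v hv
  linear_combination (Real.Gamma α * (4 * Real.pi) ^ (-α)) * this

lemma const_id (α t : ℝ) (hα : 0 < α) (ht : 0 < t) :
    ((α / 2) ^ 2 * (Real.pi)⁻¹ * 2 ^ (α - 1) * betaFn (α / 2) (α / 2) * (t ^ (-α)) ^ 2) *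
      (Real.Gamma α * (4 * Real.pi) ^ (-α) * Dc α t) = t ^ (-α) := by
  have hpi := Real.pi_pos
  have hG := Real.Gamma_pos_of_pos hα
  have hG2 := Real.Gamma_pos_of_pos (half_pos hα)
  unfold Dc Cc betaFn
  rw [add_halves]
  have e1 : (4 * Real.pi) ^ (-α) * (α ^ 2 / (8 * Real.pi)) ^ (-α) = 2 ^ α / (α ^ α) ^ 2 := by
    rw [← Real.mul_rpow (by positivity) (by positivity)]
    have : 4 * Real.pi * (α ^ 2 / (8 * Real.pi)) = α ^ 2 / 2 := by field_simp; ring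
    rw [this, Real.rpow_neg (by positivity), Real.div_rpow (by positivity) (by positivity), inv_div,
      ← Real.rpow_natCast_mul hα.le, ← Real.rpow_mul_natCast hα.le, mul_comm]
  have e2 : (2:ℝ) ^ (α - 1) = 2 ^ α / 2 := by rw [Real.rpow_sub (by norm_num)]; simp
  have e3 : t ^ (-α) = (t ^ α)⁻¹ := Real.rpow_neg ht.le _
  have p1 : 0 < t ^ α := by positivity
  have p2 : 0 < α ^ α := by positivity
  have p3 : (0:ℝ) < 2 ^ α := by positivity
  rw [e2, e3]
  calc _ = (α / 2) ^ 2 * Real.pi⁻¹ * (2 ^ α / 2) * (Real.Gamma (α / 2) * Real.Gamma (α / 2) / Real.Gamma α) * (t ^ α)⁻¹ ^ 2 *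
      (Real.Gamma α * (8 * Real.pi / α ^ 2 * (α ^ α / (2 ^ α * Real.Gamma (α / 2))) ^ 2 * t ^ α)) * ((4 * Real.pi) ^ (-α) * (α ^ 2 / (8 * Real.pi)) ^ (-α)) := by ring
    _ = _ := by
      rw [e1]
      field_simp
      norm_num

/-- arg of a power -/
lemma arg_cpow_aux {w : ℂ} (hw : w ≠ 0) (a : ℝ) (h : |w.arg * a| < Real.pi) :
    (w ^ (a : ℂ)).arg = w.arg * a ∧ ∀ b : ℝ, a * b = 1 → (w ^ (a : ℂ)) ^ (b : ℂ) = w := by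
  rw [abs_lt] at h
  have him : (log w * (a : ℂ)).im = w.arg * a := by simp [mul_im, log_im]
  constructor
  · rw [cpow_def_of_ne_zero hw, ← log_im, log_exp (by rw [him]; exact h.1) (by rw [him]; exact h.2.le), him]
  · intro b hab
    rw [← cpow_mul _ (by rw [him]; exact h.1) (by rw [him]; exact h.2.le), ← ofReal_mul, hab]
    simp

lemma rhp_arg {w : ℂ} (hw : 0 < w.re) : w ≠ 0 ∧ |w.arg| < Real.pi / 2 := by
  constructor
  · rintro rfl; simp at hw
  · exact abs_arg_lt_pi_div_two_iff.2 (Or.inl hw)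

lemma rhp_pow {α : ℝ} (hα : 0 < α) (hα2 : α ≤ 2) {w : ℂ} (hw : 0 < w.re) :
    w ^ ((α / 2 : ℝ) : ℂ) ∈ sector α ∧ (w ^ ((α / 2 : ℝ) : ℂ)) ^ ((2 / α : ℝ) : ℂ) = w := by
  obtain ⟨h0, h1⟩ := rhp_arg hw
  have hpi := Real.pi_pos
  have h2 : |w.arg * (α / 2)| < Real.pi * α / 4 := by
    rw [abs_mul, abs_of_pos (half_pos hα)]
    nlinarith
  have h3 := arg_cpow_aux h0 (α / 2) (h2.trans_le (by nlinarith))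
  refine ⟨⟨?_, ?_⟩, h3.2 _ (by field_simp)⟩
  · rw [Ne, cpow_eq_zero_iff]; tauto
  · rw [h3.1]; exact h2

lemma sector_pow {α : ℝ} (hα : 0 < α) {z : ℂ} (hz : z ∈ sector α) :
    0 < (z ^ ((2 / α : ℝ) : ℂ)).re ∧ (z ^ ((2 / α : ℝ) : ℂ)) ^ ((α / 2 : ℝ) : ℂ) = z := by
  obtain ⟨h0, h1⟩ := hz
  have hpi := Real.pi_pos
  have h2 : |z.arg * (2 / α)| < Real.pi / 2 := by
    rw [abs_mul, abs_of_pos (by positivity : 0 < 2 / α)]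
    calc |z.arg| * (2 / α) < Real.pi * α / 4 * (2 / α) := by gcongr
      _ = _ := by field_simp; norm_num
  have h3 := arg_cpow_aux h0 (2 / α) (h2.trans (by linarith))
  refine ⟨?_, h3.2 _ (by field_simp)⟩
  rw [← h3.1, abs_arg_lt_pi_div_two_iff] at h2
  rcases h2 with h2 | h2
  · exact h2
  · rw [cpow_eq_zero_iff] at h2; tauto

lemma sector_image {α : ℝ} (hα : 0 < α) (hα2 : α ≤ 2) :
    (fun w : ℂ => w ^ ((α / 2 : ℝ) : ℂ)) '' {w : ℂ | 0 < w.re} = sector α := by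
  apply Subset.antisymm
  · rintro _ ⟨w, hw, rfl⟩
    exact (rhp_pow hα hα2 hw).1
  · intro z hz
    exact ⟨_, (sector_pow hα hz).1, (sector_pow hα hz).2⟩

lemma det_aux (c : ℂ) : ((ContinuousLinearMap.toSpanSingleton ℂ c).restrictScalars ℝ : ℂ →L[ℝ] ℂ).det = ‖c‖ ^ 2 := by
  simp [ContinuousLinearMap.det, LinearMap.det_restrictScalars,
      Algebra.norm_complex_eq, Complex.normSq_eq_norm_sq]

lemma sector_lint {α : ℝ} (hα : 0 < α) (hα2 : α ≤ 2) (f : ℂ → ENNReal) :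
    ∫⁻ z in sector α, f z = ∫⁻ w in {w : ℂ | 0 < w.re},
      ENNReal.ofReal ((α / 2) ^ 2 * ‖w‖ ^ (α - 2)) * f (w ^ ((α / 2 : ℝ) : ℂ)) := by
  have hSm : MeasurableSet {w : ℂ | 0 < w.re} := measurableSet_lt measurable_const measurable_re
  rw [← sector_image hα hα2, lintegral_image_eq_lintegral_abs_det_fderiv_mul volume hSm
    (f' := fun w => (ContinuousLinearMap.toSpanSingleton ℂ (((α / 2 : ℝ) : ℂ) * w ^ (((α / 2 : ℝ) : ℂ) - 1))).restrictScalars ℝ)]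
  · apply setLIntegral_congr_fun hSm
    intro w hw
    have hw0 : 0 < ‖w‖ := norm_pos_iff.2 (rhp_arg hw).1
    simp only
    rw [det_aux, abs_of_nonneg (by positivity)]
    congr 2
    have : ((α / 2 : ℝ) : ℂ) - 1 = ((α / 2 - 1 : ℝ) : ℂ) := by push_cast; ring
    rw [norm_mul, Complex.norm_real, this, Complex.norm_cpow_real, mul_pow, Real.norm_eq_abs, sq_abs,
      ← Real.rpow_mul_natCast (norm_nonneg _)]
    congr 2
    push_cast; ring
  · intro w hw
    have : HasDerivAt (fun w : ℂ => w ^ ((α / 2 : ℝ) : ℂ)) (((α / 2 : ℝ) : ℂ) * w ^ (((α / 2 : ℝ) : ℂ) - 1)) w :=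
      (hasStrictDerivAt_cpow_const (Or.inl hw)).hasDerivAt
    exact (this.hasFDerivAt.restrictScalars ℝ).hasFDerivWithinAt
  · intro w hw u hu h
    have h1 := (rhp_pow hα hα2 hw).2
    have h2 := (rhp_pow hα hα2 hu).2
    simp only at h
    rw [← h1, h, h2]

lemma iso (α t : ℝ) (hα : 0 < α) (hα2 : α ≤ 2) (ht : 0 < t) (φ : ℝ → ℂ) (hφ : Measurable φ)
    (hint : IntegrableOn (fun τ => ‖φ τ‖ ^ 2 * τ ^ α) (Set.Ioo 0 t)) :
    ∫⁻ z in sector α, ENNReal.ofReal (muDens α t z) * ‖Lc α t φ z‖ₑ ^ 2 =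
      ENNReal.ofReal (t ^ (-α)) * ∫⁻ τ in Ioo 0 t, ‖φ τ‖ₑ ^ 2 * ENNReal.ofReal (τ ^ α) := by
  have hpi := Real.pi_pos
  have hG := Real.Gamma_pos_of_pos hα
  have hG2 := Real.Gamma_pos_of_pos (half_pos hα)
  have hB : 0 < betaFn (α / 2) (α / 2) := by unfold betaFn; rw [add_halves]; positivity
  have hSm : MeasurableSet {w : ℂ | 0 < w.re} := measurableSet_lt measurable_const measurable_re
  rw [← const_id α t hα ht, ENNReal.ofReal_mul (by positivity), mul_assoc, ← hh_lint α t hα ht φ,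
    ← halfplane_planch α (v0c α t) hα _ (hh_meas α t φ hφ) (hh_int α t hα ht φ hint),
    ← lintegral_const_mul' _ _ ENNReal.ofReal_ne_top, sector_lint hα hα2]
  apply setLIntegral_congr_fun hSm
  intro w hw
  have hw' : 0 < w.re := hw
  have hw0 : 0 < ‖w‖ := norm_pos_iff.2 (rhp_arg hw).1
  simp only
  rw [Lc_eq α t hα ht, (rhp_pow hα hα2 hw).2]
  generalize (∫ v in Ioi (v0c α t), hh α t φ v * Complex.exp (-(2 * Real.pi * v * w))) = H
  unfold muDens
  rw [(rhp_pow hα hα2 hw).2]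
  simp only [← ofReal_norm, ← ENNReal.ofReal_pow (norm_nonneg _)]
  rw [← ENNReal.ofReal_mul (by positivity), ← ENNReal.ofReal_mul (by positivity), ← ENNReal.ofReal_mul (by positivity),
    ← ENNReal.ofReal_mul (by positivity)]
  congr 1
  rw [norm_mul, norm_mul, Complex.norm_real, Real.norm_of_nonneg (by positivity), Complex.norm_cpow_real]
  have e1 : (‖w‖ ^ (α / 2)) ^ (4 * (1 - α) / α) = ‖w‖ ^ (2 - 2 * α) := by
    rw [← Real.rpow_mul hw0.le]; congr 1; field_simp; ring
  have e2 : (‖w‖ ^ (α / 2)) ^ 2 = ‖w‖ ^ α := by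
    rw [← Real.rpow_mul_natCast hw0.le]; congr 1; push_cast; ring
  have e3 : ‖w‖ ^ (α - 2) * (‖w‖ ^ (2 - 2 * α) * ‖w‖ ^ α) = 1 := by
    rw [← Real.rpow_add hw0, ← Real.rpow_add hw0]; ring_nf; simp
  have e4 : α ^ 2 / (2 * t) * w.re = 4 * Real.pi * v0c α t * w.re := by
    unfold v0c; field_simp; norm_num
  rw [e1, e4, mul_pow, mul_pow, e2]
  linear_combination ((α / 2) ^ 2 * (Real.pi)⁻¹ * 2 ^ (α - 1) * betaFn (α / 2) (α / 2) * (t ^ (-α)) ^ 2 * ‖H‖ ^ 2 *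
    (Real.exp (4 * Real.pi * v0c α t * w.re) * w.re ^ (α - 1))) * e3

lemma sector_slit {α : ℝ} (hα2 : α ≤ 2) {z : ℂ} (hz : z ∈ sector α) : z ∈ slitPlane := by
  obtain ⟨h0, h1⟩ := hz
  have hpi := Real.pi_pos
  have : |z.arg| < Real.pi / 2 := h1.trans_le (by nlinarith)
  rw [abs_arg_lt_pi_div_two_iff] at this
  exact Or.inl (this.resolve_right h0)

lemma pow_contOn {α : ℝ} (hα2 : α ≤ 2) :
    ContinuousOn (fun z : ℂ => (z ^ ((2 / α : ℝ) : ℂ)).re) (sector α) := by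
  intro z hz
  have h1 : ContinuousAt (fun z : ℂ => z ^ ((2 / α : ℝ) : ℂ)) z :=
    (hasStrictDerivAt_cpow_const (sector_slit hα2 hz)).hasDerivAt.continuousAt
  exact (continuous_re.continuousAt.comp h1).continuousWithinAt

lemma muDens_contOn {α : ℝ} (t : ℝ) (hα : 0 < α) (hα2 : α ≤ 2) : ContinuousOn (muDens α t) (sector α) := by
  have h := pow_contOn hα2
  unfold muDens
  refine ContinuousOn.mul (ContinuousOn.mul (ContinuousOn.mul continuousOn_const ?_) ?_) ?_
  · exact continuous_norm.continuousOn.rpow_const fun z hz => Or.inl (norm_pos_iff.2 hz.1).ne'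
  · exact (continuousOn_const.mul h).rexp
  · exact h.rpow_const fun z hz => Or.inl (sector_pow hα hz).1.ne'

lemma muDens_nonneg {α : ℝ} (t : ℝ) (hα : 0 < α) {z : ℂ} (hz : z ∈ sector α) : 0 ≤ muDens α t z := by
  have hpi := Real.pi_pos
  have hG := Real.Gamma_pos_of_pos hα
  have hG2 := Real.Gamma_pos_of_pos (half_pos hα)
  have hB : 0 < betaFn (α / 2) (α / 2) := by unfold betaFn; rw [add_halves]; positivity
  have := (sector_pow hα hz).1
  unfold muDens
  positivity

lemma muDens_meas (α t : ℝ) : Measurable (muDens α t) := by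
  unfold muDens
  fun_prop

lemma Kc_bdd {α t : ℝ} (hα : 0 < α) (hα2 : α ≤ 2) (E : Set ℂ) (hE : IsCompact E) (hs : E ⊆ sector α) :
    ∃ C : ℝ, ∀ z ∈ E, ∀ τ, ‖(Ioo 0 t).indicator (fun τ => Kc α z (t - τ)) τ‖ ≤ C := by
  rcases E.eq_empty_or_nonempty with rfl | hne
  · exact ⟨0, by simp⟩
  obtain ⟨z0, hz0, hmin⟩ := hE.exists_isMinOn hne ((pow_contOn hα2).mono hs)
  obtain ⟨R, hR⟩ := hE.isBounded.exists_norm_le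
  set c := (z0 ^ ((2 / α : ℝ) : ℂ)).re with hc
  have hcpos : 0 < c := (sector_pow hα (hs hz0)).1
  have hG2 := Real.Gamma_pos_of_pos (half_pos hα)
  set b := α ^ 2 * c / 4 with hb
  have hbpos : 0 < b := by positivity
  have hR0 : 0 ≤ R := (norm_nonneg z0).trans (hR z0 hz0)
  have hnn : 0 ≤ (α ^ α / (2 ^ α * Real.Gamma (α / 2))) * R * ((α / 2 + 1) / b) ^ (α / 2 + 1) := by positivity
  refine ⟨(α ^ α / (2 ^ α * Real.Gamma (α / 2))) * R * ((α / 2 + 1) / b) ^ (α / 2 + 1), ?_⟩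
  intro z hz τ
  by_cases hτ : τ ∈ Ioo 0 t
  swap
  · rw [indicator_of_notMem hτ, norm_zero]; exact hnn
  rw [indicator_of_mem hτ]
  have hspos : 0 < t - τ := sub_pos.mpr hτ.2
  set s := t - τ
  have hcz : c ≤ (z ^ ((2 / α : ℝ) : ℂ)).re := hmin hz
  unfold Kc
  have hre : (-(α ^ 2 : ℂ) * z ^ (((2 / α : ℝ)) : ℂ) / (4 * (s : ℂ))).re = -(α ^ 2 * (z ^ (((2 / α : ℝ)) : ℂ)).re / (4 * s)) := by
    have : (-(α ^ 2 : ℂ) * z ^ (((2 / α : ℝ)) : ℂ) / (4 * (s : ℂ))) = ((-(α ^ 2) / (4 * s) : ℝ) : ℂ) * z ^ (((2 / α : ℝ)) : ℂ) := by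
      push_cast; ring
    rw [this, re_ofReal_mul]; ring
  rw [norm_mul, norm_mul, norm_mul, Complex.norm_real, Complex.norm_real, Real.norm_of_nonneg (by positivity),
    Real.norm_of_nonneg (by positivity), Complex.norm_exp, hre, mul_assoc _ (s ^ _)]
  gcongr
  · exact hR z hz
  · have h1 := rpow_le_exp_aux (p := α / 2 + 1) (by positivity) hbpos (inv_pos.2 hspos)
    rw [Real.inv_rpow hspos.le, ← Real.rpow_neg hspos.le] at h1
    calc s ^ (-(α / 2 + 1)) * Real.exp (-(α ^ 2 * (z ^ (((2 / α : ℝ)) : ℂ)).re / (4 * s)))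
        ≤ (((α / 2 + 1) / b) ^ (α / 2 + 1) * Real.exp (b * s⁻¹)) * Real.exp (-(b * s⁻¹)) := by
          gcongr
          rw [hb, div_mul_eq_mul_div, ← div_eq_mul_inv, div_div, mul_comm s 4]
          gcongr
      _ = _ := by
          rw [mul_assoc, ← Real.exp_add]; simp

lemma conj_Kc (α : ℝ) (z : ℂ) (s : ℝ) (hα : 0 < α) (hs : 0 < s) :
    (starRingEnd ℂ) (Kc α z s) = (((α / 2) ^ α / (Real.Gamma (α / 2) * s ^ (α / 2 + 1)) : ℝ) : ℂ) *
      ((starRingEnd ℂ) z * Complex.exp (-(α ^ 2 : ℂ) * (starRingEnd ℂ) (z ^ (((2 / α : ℝ)) : ℂ)) /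
              (4 * ((s : ℝ) : ℂ)))) := by
  have h1 : (α / 2) ^ α / (Real.Gamma (α / 2) * s ^ (α / 2 + 1)) =
      (α ^ α / (2 ^ α * Real.Gamma (α / 2))) * s ^ (-(α / 2 + 1)) := by
    have hG2 := Real.Gamma_pos_of_pos (half_pos hα)
    rw [Real.div_rpow hα.le (by norm_num), Real.rpow_neg hs.le]
    field_simp
  rw [h1]
  unfold Kc
  have h4 : (starRingEnd ℂ) (4 : ℂ) = 4 := Complex.conj_ofNat 4
  simp only [map_mul, conj_ofReal, ← Complex.exp_conj, map_div₀, map_neg, map_pow, h4]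
  push_cast
  ring

theorem stmt17 (α t : ℝ) (hα : 0 < α) (hα2 : α ≤ 2) (ht : 0 < t)
    (g : ℝ → ℂ) (hg : Measurable g)
    (hint : IntegrableOn (fun τ => ‖g τ‖ ^ 2 * τ ^ α) (Set.Ioo 0 t))
    (E : ℕ → Set ℂ) (hEcomp : ∀ N, IsCompact (E N))
    (hEsub : ∀ N, E N ⊆ sector α) (hEmono : ∀ N, E N ⊆ E (N + 1))
    (hEunion : (⋃ N, E N) = sector α)
    (gN : ℕ → ℝ → ℂ)
    (hgN : ∀ N, ∀ τ ∈ Set.Ioo (0 : ℝ) t, gN N τ =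
      (((α / 2) ^ α / (Real.Gamma (α / 2) * (t - τ) ^ (α / 2 + 1)) : ℝ) : ℂ) *
        ∫ z in E N,
          (starRingEnd ℂ) z * Lc α t g z *
            Complex.exp (-(α ^ 2 : ℂ) * (starRingEnd ℂ) (z ^ (((2 / α : ℝ)) : ℂ)) /
              (4 * (((t - τ : ℝ)) : ℂ))) *
            ((muDens α t z : ℝ) : ℂ)) :
    Tendsto (fun N => ∫ τ in Set.Ioo (0 : ℝ) t, ‖gN N τ - g τ‖ ^ 2 * τ ^ α)
      atTop (nhds 0) := by
  have htα : 0 < t ^ (-α) := by positivity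
  set ρ : ℝ → ENNReal := fun τ => ENNReal.ofReal (t ^ (-α) * τ ^ α) with hρ
  set d : ℂ → ENNReal := fun z => ENNReal.ofReal (muDens α t z) with hd
  have hρm : Measurable ρ := by rw [hρ]; fun_prop
  have hdm : Measurable d := (muDens_meas α t).ennreal_ofReal
  set ν : Measure ℝ := (volume.restrict (Ioo 0 t)).withDensity ρ with hν
  set μ : Measure ℂ := (volume.restrict (sector α)).withDensity d with hμ
  have hEm : ∀ N, MeasurableSet (E N) := fun N => (hEcomp N).isClosed.measurableSet
  have hSm : MeasurableSet (sector α) := by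
    rw [← hEunion]; exact MeasurableSet.iUnion hEm
  have hνfin : IsFiniteMeasure ν := by
    refine isFiniteMeasure_withDensity ?_
    refine LT.lt.ne ?_
    refine (setLIntegral_mono (g := fun _ => 1) measurable_const fun τ hτ => ?_).trans_lt ?_
    · rw [hρ]
      simp only
      rw [ENNReal.ofReal_le_one, Real.rpow_neg ht.le, inv_mul_le_iff₀ (by positivity), mul_one]
      exact Real.rpow_le_rpow hτ.1.le hτ.2.le hα.le
    · simp
  let K : ℂ → ℝ → ℂ := fun z => (Ioo 0 t).indicator (fun τ => Kc α z (t - τ))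
  have hKm : Measurable (Function.uncurry K) := by
    have : Function.uncurry K = (Prod.snd ⁻¹' (Ioo 0 t)).indicator (fun p : ℂ × ℝ => Kc α p.1 (t - p.2)) := by
      ext p
      simp only [Function.uncurry, K, indicator, mem_preimage]
      split_ifs <;> rfl
    rw [this]
    refine Measurable.indicator ?_ (measurable_snd measurableSet_Ioo)
    unfold Kc
    fun_prop
  have ρreal : ∀ τ ∈ Ioo 0 t, (ρ τ).toReal = t ^ (-α) * τ ^ α := by
    intro τ hτ
    have := hτ.1
    exact ENNReal.toReal_ofReal (by positivity)
  have hL : ∀ (φ : ℝ → ℂ) z, ∫ τ, K z τ * φ τ ∂ν = Lc α t φ z := by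
    intro φ z
    rw [hν, integral_withDensity_eq_integral_toReal_smul hρm (.of_forall fun _ => ENNReal.ofReal_lt_top)]
    unfold Lc
    rw [← integral_const_mul]
    apply setIntegral_congr_fun measurableSet_Ioo
    intro τ hτ
    simp only [K]
    rw [indicator_of_mem hτ, ρreal τ hτ, Complex.real_smul]
    push_cast
    ring
  have hmem : ∀ φ : ℝ → ℂ, Measurable φ →
      (MemLp φ 2 ν ↔ IntegrableOn (fun τ => ‖φ τ‖ ^ 2 * τ ^ α) (Set.Ioo 0 t)) := by
    intro φ hφ
    rw [memLp_two_iff_integrable_sq_norm hφ.aestronglyMeasurable, hν,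
      integrable_withDensity_iff hρm (.of_forall fun _ => ENNReal.ofReal_lt_top)]
    have h1 : Integrable (fun τ => ‖φ τ‖ ^ 2 * (ρ τ).toReal) (volume.restrict (Ioo 0 t)) ↔
        Integrable (fun τ => t ^ (-α) * (‖φ τ‖ ^ 2 * τ ^ α)) (volume.restrict (Ioo 0 t)) := by
      apply integrable_congr
      filter_upwards [ae_restrict_mem measurableSet_Ioo] with τ hτ
      rw [ρreal τ hτ]; ring
    rw [h1, integrable_const_mul_iff (htα.ne'.isUnit)]
    rfl
  have hiso : ∀ φ : ℝ → ℂ, Measurable φ → MemLp φ 2 ν →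
      ∫⁻ z, ‖∫ x, K z x * φ x ∂ν‖ₑ ^ 2 ∂μ = ∫⁻ x, ‖φ x‖ₑ ^ 2 ∂ν := by
    intro φ hφ h2
    simp_rw [hL]
    rw [hμ, hν, lintegral_withDensity_eq_lintegral_mul_non_measurable _ hdm (.of_forall fun _ => ENNReal.ofReal_lt_top),
      lintegral_withDensity_eq_lintegral_mul_non_measurable _ hρm (.of_forall fun _ => ENNReal.ofReal_lt_top)]
    simp only [Pi.mul_apply]
    rw [hd, iso α t hα hα2 ht φ hφ ((hmem φ hφ).1 h2), ← lintegral_const_mul' _ _ ENNReal.ofReal_ne_top]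
    congr 1
    ext τ
    rw [hρ]
    simp only
    rw [ENNReal.ofReal_mul htα.le]
    ring
  have hfin : ∀ N, μ (E N) < ⊤ := by
    intro N
    rw [hμ, withDensity_apply _ (hEm N), Measure.restrict_restrict (hEm N), inter_eq_left.2 (hEsub N)]
    have hi : IntegrableOn (muDens α t) (E N) :=
      ((muDens_contOn t hα hα2).mono (hEsub N)).integrableOn_compact (hEcomp N)
    exact hi.lintegral_lt_top
  have key := abstract_inv ν μ K hKm hiso g hg ((hmem g hg).2 hint) E hEm (monotone_nat_of_le_succ hEmono)
    (by
      rw [hEunion]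
      exact (withDensity_absolutelyContinuous _ _).ae_le (ae_restrict_mem hSm)) hfin
    (fun N => Kc_bdd hα hα2 (E N) (hEcomp N) (hEsub N))
  simp_rw [hL] at key
  have hG : ∀ N, ∀ τ ∈ Ioo 0 t, ∫ z in E N, (starRingEnd ℂ) (K z τ) * Lc α t g z ∂μ = gN N τ := by
    intro N τ hτ
    rw [hgN N τ hτ, hμ, restrict_withDensity (hEm N), Measure.restrict_restrict (hEm N), inter_eq_left.2 (hEsub N),
      integral_withDensity_eq_integral_toReal_smul hdm (.of_forall fun _ => ENNReal.ofReal_lt_top), ← integral_const_mul]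
    apply setIntegral_congr_fun (hEm N)
    intro z hz
    simp only [K]
    rw [indicator_of_mem hτ, conj_Kc α z (t - τ) hα (sub_pos.mpr hτ.2), hd,
      ENNReal.toReal_ofReal (muDens_nonneg t hα (hEsub N hz)), Complex.real_smul]
    ring
  have hfinal : ∀ N, ∫ τ, ‖(∫ z in E N, (starRingEnd ℂ) (K z τ) * Lc α t g z ∂μ) - g τ‖ ^ 2 ∂ν =
      t ^ (-α) * ∫ τ in Set.Ioo (0 : ℝ) t, ‖gN N τ - g τ‖ ^ 2 * τ ^ α := by
    intro N
    conv_lhs => rw [hν]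
    rw [integral_withDensity_eq_integral_toReal_smul hρm (.of_forall fun _ => ENNReal.ofReal_lt_top), ← integral_const_mul]
    apply setIntegral_congr_fun measurableSet_Ioo
    intro τ hτ
    simp only
    rw [hG N τ hτ, ρreal τ hτ, smul_eq_mul]
    ring
  simp_rw [hfinal] at key
  have := key.const_mul (t ^ (-α))⁻¹
  simpa [inv_mul_cancel_left₀ htα.ne'] using this
end

section
/- Fix 0 < α ≤ 2 and an integer j ≥ 0. Let f be holomorphic on the open sector Δ_α and suppose ∫_{Δ_α} |f(z)|² (Re(z^{2/α}))^{α-1} |z|^{(α-2)(α-1)/α} dA(z) < ∞. Then lim_{x→∞} x^{j+(α+1)/2} f^{(j)}(x) = 0 and lim_{x→0⁺} x^{j+(α+1)/2} f^{(j)}(x) = 0, where f^{(j)} denotes the j-th complex derivative of f evaluated at the positive real number x. -/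
open MeasureTheory Filter Set

theorem circ_bound (h : ℂ → ℂ) (R r : ℝ) (hr : 0 < r) (hrR : r < R)
    (hh : DifferentiableOn ℂ h (Metric.ball 0 R)) :
    ENNReal.ofReal (2 * Real.pi) * ‖h 0‖ₑ ≤
      ∫⁻ θ in Ioo (-Real.pi) Real.pi, ‖h (Complex.polarCoord.symm (r, θ))‖ₑ := by
  have hd : DiffContOnCl ℂ h (Metric.ball 0 |r|) := by
    apply DifferentiableOn.diffContOnCl
    rw [abs_of_pos hr, closure_ball _ hr.ne']
    exact hh.mono (Metric.closedBall_subset_ball hrR)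
  have h1 := hd.circleAverage
  rw [Real.circleAverage_eq_integral_add (-Real.pi)] at h1
  rw [intervalIntegral.integral_comp_add_right (fun θ => h (circleMap 0 r θ))] at h1
  rw [zero_add, show 2 * Real.pi + -Real.pi = Real.pi by ring,
    intervalIntegral.integral_of_le (by linarith [Real.pi_pos]), integral_Ioc_eq_integral_Ioo] at h1
  have h2 : (2 * Real.pi) • h 0 = ∫ θ in Ioo (-Real.pi) Real.pi, h (circleMap 0 r θ) := by
    rw [← h1, smul_smul, mul_inv_cancel₀ (by positivity), one_smul]
  have h3 : ENNReal.ofReal (2 * Real.pi) * ‖h 0‖ₑ = ‖(2 * Real.pi) • h 0‖ₑ := by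
    rw [enorm_smul, Real.enorm_eq_ofReal (by positivity)]
  rw [h3, h2]
  refine (enorm_integral_le_lintegral_enorm _).trans (le_of_eq ?_)
  congr 1
  ext θ
  congr 2
  rw [Complex.polarCoord_symm_apply, circleMap, Complex.exp_mul_I]
  simp

theorem mean_zero (h : ℂ → ℂ) (R : ℝ) (hR : 0 < R)
    (hh : DifferentiableOn ℂ h (Metric.ball 0 R)) :
    ENNReal.ofReal (Real.pi * R ^ 2 / 2) * ‖h 0‖ₑ ≤ ∫⁻ z in Metric.ball (0:ℂ) R, ‖h z‖ₑ := by
  rw [← lintegral_indicator measurableSet_ball, ← Complex.lintegral_comp_polarCoord_symm]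
  set S : Set (ℝ × ℝ) := Ioo (R / 2) R ×ˢ Ioo (-Real.pi) Real.pi with hS
  have hSm : MeasurableSet S := measurableSet_Ioo.prod measurableSet_Ioo
  have hsub : S ⊆ polarCoord.target := by
    rintro ⟨r, θ⟩ ⟨h1, h2⟩
    simp only [mem_Ioo] at h1 h2
    simp only [polarCoord_target, mem_prod, mem_Ioi, mem_Ioo]
    exact ⟨by linarith, h2⟩
  refine le_trans ?_ (lintegral_mono_set hsub)
  have hmaps : MapsTo Complex.polarCoord.symm S (Metric.ball (0:ℂ) R) := by
    rintro ⟨r, θ⟩ ⟨h1, h2⟩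
    simp only [mem_Ioo] at h1
    rw [mem_ball_zero_iff, Complex.norm_polarCoord_symm, abs_of_pos (by linarith)]
    exact h1.2
  have hstep : ∫⁻ p in S, ENNReal.ofReal (R / 2) * ‖h (Complex.polarCoord.symm p)‖ₑ ≤
      ∫⁻ p in S, ENNReal.ofReal p.1 •
        (Metric.ball (0:ℂ) R).indicator (fun z => ‖h z‖ₑ) (Complex.polarCoord.symm p) := by
    apply setLIntegral_mono' hSm
    intro p hp
    rw [indicator_of_mem (hmaps hp), smul_eq_mul]
    gcongr
    exact hp.1.1.le
  refine le_trans ?_ hstep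
  have hcont : ContinuousOn (fun p : ℝ × ℝ => h (Complex.polarCoord.symm p)) S := by
    refine hh.continuousOn.comp (Continuous.continuousOn ?_) hmaps
    have : (Complex.polarCoord.symm : ℝ × ℝ → ℂ) =
      fun p => p.1 * (Real.cos p.2 + Real.sin p.2 * Complex.I) := by
      ext p; exact Complex.polarCoord_symm_apply p
    rw [this]
    fun_prop
  have hmeas : AEMeasurable
      (fun p : ℝ × ℝ => ENNReal.ofReal (R / 2) * ‖h (Complex.polarCoord.symm p)‖ₑ)
      (volume.restrict S) :=
    (hcont.aestronglyMeasurable hSm).enorm.const_mul _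
  rw [hS, Measure.volume_eq_prod, ← Measure.prod_restrict] at hmeas ⊢
  rw [lintegral_prod _ hmeas]
  have hl : ∫⁻ r in Ioo (R / 2) R, ENNReal.ofReal (R / 2) * (ENNReal.ofReal (2 * Real.pi) * ‖h 0‖ₑ)
      = ENNReal.ofReal (Real.pi * R ^ 2 / 2) * ‖h 0‖ₑ := by
    rw [setLIntegral_const, Real.volume_Ioo, show R - R / 2 = R / 2 by ring, mul_right_comm, ← mul_assoc,
      ← ENNReal.ofReal_mul (by positivity), ← ENNReal.ofReal_mul (by positivity)]
    congr 2
    ring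
  rw [← hl]
  apply setLIntegral_mono' measurableSet_Ioo
  intro r hr
  rw [lintegral_const_mul' _ _ ENNReal.ofReal_ne_top]
  gcongr
  exact circ_bound h R r (by linarith [hr.1]) hr.2 hh

theorem mean_area (h : ℂ → ℂ) (c : ℂ) (R : ℝ) (hR : 0 < R)
    (hh : DifferentiableOn ℂ h (Metric.ball c R)) :
    ENNReal.ofReal (Real.pi * R ^ 2 / 2) * ‖h c‖ₑ ≤ ∫⁻ z in Metric.ball c R, ‖h z‖ₑ := by
  have h0 := mean_zero (fun z => h (z + c)) R hR (hh.comp (by fun_prop) (by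
    intro z hz
    simpa using hz))
  rw [zero_add] at h0
  refine h0.trans (le_of_eq ?_)
  rw [← lintegral_indicator measurableSet_ball, ← lintegral_indicator measurableSet_ball,
    ← lintegral_add_right_eq_self ((Metric.ball c R).indicator fun z => ‖h z‖ₑ) c]
  congr 1
  ext z
  by_cases hz : ‖z‖ < R <;> simp [indicator, hz]

/-- the weight -/
noncomputable def wt (α : ℝ) (z : ℂ) : ℝ :=
  ((z ^ (((2 / α : ℝ)) : ℂ)).re) ^ (α - 1) * ‖z‖ ^ ((α - 2) * (α - 1) / α)

theorem wt_scale (α : ℝ) (hα : 0 < α) (x : ℝ) (hx : 0 < x) (z : ℂ) (hz : z ≠ 0)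
    (hre : 0 < (z ^ (((2 / α : ℝ)) : ℂ)).re) : wt α (x * z) = x ^ (α - 1) * wt α z := by
  have h1 : ((x : ℂ) * z) ^ (((2 / α : ℝ)) : ℂ)
      = ((x ^ (2 / α) : ℝ) : ℂ) * z ^ (((2 / α : ℝ)) : ℂ) := by
    have hx' : (x : ℂ) ≠ 0 := by exact_mod_cast hx.ne'
    rw [Complex.cpow_def_of_ne_zero (mul_ne_zero hx' hz), Complex.log_ofReal_mul hx hz, add_mul,
      Complex.exp_add, ← Complex.cpow_def_of_ne_zero hz, Real.rpow_def_of_pos hx]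
    push_cast
    rfl
  unfold wt
  rw [h1, Complex.re_ofReal_mul, Real.mul_rpow (by positivity) hre.le, norm_mul,
    Complex.norm_real, Real.norm_of_nonneg hx.le, Real.mul_rpow hx.le (norm_nonneg _),
    ← Real.rpow_mul hx.le]
  have h2 : x ^ (α - 1) = x ^ (2 / α * (α - 1)) * x ^ ((α - 2) * (α - 1) / α) := by
    rw [← Real.rpow_add hx]
    congr 1
    field_simp
    ring
  rw [h2]
  ring

theorem exists_delta (α : ℝ) (hα : 0 < α) : ∃ δ : ℝ, 0 < δ ∧ δ < 1 ∧
    ∀ x : ℝ, 0 < x → ∀ z ∈ Metric.ball (x : ℂ) (δ * x),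
      z ∈ sector α ∧ x ^ (α - 1) / 2 ≤ wt α z := by
  have hc1 : ContinuousAt (fun z : ℂ => (z ^ (((2 / α : ℝ)) : ℂ)).re) 1 :=
    Complex.continuous_re.continuousAt.comp
      (continuousAt_id.cpow continuousAt_const (by simp [Complex.slitPlane]))
  have hc2 : ContinuousAt (wt α) 1 := by
    unfold wt
    refine (hc1.rpow_const (Or.inl (by simp))).mul
      (continuous_norm.continuousAt.rpow_const (Or.inl (by simp)))
  have hc3 : ContinuousAt (fun z : ℂ => |Complex.arg z|) 1 :=
    (Complex.continuousAt_arg (by simp [Complex.slitPlane])).abs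
  have e1 : ∀ᶠ z : ℂ in nhds 1, 0 < (z ^ (((2 / α : ℝ)) : ℂ)).re :=
    hc1.eventually (lt_mem_nhds (by simp))
  have e2 : ∀ᶠ z : ℂ in nhds 1, 1 / 2 < wt α z :=
    hc2.eventually (lt_mem_nhds (by simp [wt]; norm_num))
  have e3 : ∀ᶠ z : ℂ in nhds 1, |Complex.arg z| < Real.pi * α / 4 :=
    hc3.eventually (gt_mem_nhds (by simp; positivity))
  have e4 : ∀ᶠ z : ℂ in nhds 1, z ≠ 0 := eventually_ne_nhds one_ne_zero
  obtain ⟨ε, hε, hb⟩ := Metric.eventually_nhds_iff_ball.1 (e1.and (e2.and (e3.and e4)))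
  refine ⟨min ε (1 / 2), by positivity, by linarith [min_le_right ε (1 / 2)], ?_⟩
  intro x hx z hz
  have hx' : (x : ℂ) ≠ 0 := by exact_mod_cast hx.ne'
  obtain ⟨u, rfl⟩ : ∃ u : ℂ, z = x * u := ⟨z / x, by field_simp⟩
  have hu : u ∈ Metric.ball (1 : ℂ) ε := by
    rw [Metric.mem_ball, dist_eq_norm] at hz ⊢
    have : (x : ℂ) * u - x = x * (u - 1) := by ring
    rw [this, norm_mul, Complex.norm_real, Real.norm_of_nonneg hx.le, mul_comm] at hz
    exact (lt_of_mul_lt_mul_right hz hx.le).trans_le (min_le_left _ _)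
  obtain ⟨b1, b2, b3, b4⟩ := hb u hu
  refine ⟨⟨mul_ne_zero hx' b4, ?_⟩, ?_⟩
  · rwa [Complex.arg_real_mul _ hx]
  · rw [wt_scale α hα x hx u b4 b1]
    have := Real.rpow_pos_of_pos hx (α - 1)
    nlinarith

theorem key_tendsto (G : ℂ → ℝ) (s : Set ℂ) (δ : ℝ) (hδ : δ < 1) (hδ0 : 0 < δ)
    (hs : ∀ x : ℝ, 0 < x → Metric.ball (x : ℂ) (δ * x) ⊆ s)
    (hG : IntegrableOn G s) (l : Filter ℝ) [l.IsCountablyGenerated] (hl0 : ∀ᶠ x in l, 0 < x)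
    (hl : ∀ a : ℝ, 0 < a → ∀ᶠ x in l, a ≤ (1 - δ) * x ∨ (1 + δ) * x ≤ a) :
    Tendsto (fun x : ℝ => ∫ z in Metric.ball (x : ℂ) (δ * x), ‖G z‖) l (nhds 0) := by
  have h1 : Tendsto (fun x : ℝ => ∫ z in s, (Metric.ball (x : ℂ) (δ * x)).indicator
      (fun z => ‖G z‖) z) l (nhds (∫ z in s, (0:ℝ))) := by
    refine tendsto_integral_filter_of_dominated_convergence (fun z => ‖G z‖) ?_ ?_ hG.norm ?_
    · exact Eventually.of_forall fun x => hG.norm.aestronglyMeasurable.indicator measurableSet_ball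
    · refine Eventually.of_forall fun x => Eventually.of_forall fun z => ?_
      refine (norm_indicator_le_norm_self _ _).trans (by simp)
    · have h0 : ∀ᵐ z : ℂ ∂(volume.restrict s), z ≠ 0 :=
        ae_restrict_of_ae (by simp [ae_iff])
      filter_upwards [h0] with z hz
      apply tendsto_const_nhds.congr'
      filter_upwards [hl0, hl ‖z‖ (norm_pos_iff.2 hz)] with x hx hxz
      rw [indicator_of_notMem]
      intro hmem
      rw [Metric.mem_ball, dist_eq_norm] at hmem
      have n1 : ‖(x : ℂ)‖ = x := by rw [Complex.norm_real, Real.norm_of_nonneg hx.le]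
      have a1 := norm_sub_norm_le z (x : ℂ)
      have a2 := norm_sub_norm_le (x : ℂ) z
      rw [norm_sub_rev] at a2
      rcases hxz with h | h <;> nlinarith
  rw [integral_zero] at h1
  refine h1.congr' ?_
  filter_upwards [hl0] with x hx
  rw [integral_indicator measurableSet_ball, Measure.restrict_restrict_of_subset (hs x hx)]

theorem key_bound (α : ℝ) (f : ℂ → ℂ) (hf : DifferentiableOn ℂ f (sector α))
    (hfint : IntegrableOn (fun z => ‖f z‖ ^ 2 * wt α z) (sector α)) (δ : ℝ) (hδ0 : 0 < δ)
    (x : ℝ) (hx : 0 < x)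
    (hb : ∀ z ∈ Metric.ball (x : ℂ) (δ * x), z ∈ sector α ∧ x ^ (α - 1) / 2 ≤ wt α z)
    (z : ℂ) (hz : z ∈ Metric.sphere (x : ℂ) (δ * x / 2)) :
    ‖f z‖ ≤ √(16 / (Real.pi * δ ^ 2) * ∫ z in Metric.ball (x : ℂ) (δ * x), ‖‖f z‖ ^ 2 * wt α z‖)
      * x ^ (-((α + 1) / 2)) := by
  have hsub : Metric.ball z (δ * x / 2) ⊆ Metric.ball (x : ℂ) (δ * x) := by
    apply Metric.ball_subset_ball'
    rw [Metric.mem_sphere.1 hz]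
    linarith
  have hsec : Metric.ball (x : ℂ) (δ * x) ⊆ sector α := fun z hz => (hb z hz).1
  have m := mean_area (fun z => f z ^ 2) z (δ * x / 2) (by positivity)
    ((hf.mono (hsub.trans hsec)).pow 2)
  set I := ∫ z in Metric.ball (x : ℂ) (δ * x), ‖‖f z‖ ^ 2 * wt α z‖ with hI
  have hpos := Real.rpow_pos_of_pos hx (α - 1)
  have m2 : ENNReal.ofReal (x ^ (α - 1) / 2) * ∫⁻ z in Metric.ball z (δ * x / 2), ‖f z ^ 2‖ₑ ≤
      ENNReal.ofReal I := by
    rw [hI, ofReal_integral_norm_eq_lintegral_enorm (hfint.mono_set hsec),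
      ← lintegral_const_mul' _ _ ENNReal.ofReal_ne_top]
    refine (lintegral_mono_set hsub).trans ?_
    apply setLIntegral_mono' measurableSet_ball
    intro y hy
    have hy2 := (hb y hy).2
    rw [enorm_mul, mul_comm, Real.enorm_eq_ofReal (by linarith : 0 ≤ wt α y)]
    gcongr
    rw [← norm_pow, enorm_norm]
  have m3 : ENNReal.ofReal (x ^ (α - 1) / 2 * (Real.pi * (δ * x / 2) ^ 2 / 2) * ‖f z‖ ^ 2) ≤
      ENNReal.ofReal I := by
    refine le_trans (le_of_eq ?_) ((mul_le_mul_right m (ENNReal.ofReal (x ^ (α - 1) / 2))).trans m2)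
    rw [ENNReal.ofReal_mul (by positivity), ENNReal.ofReal_mul (by positivity), mul_assoc,
      ← norm_pow, ofReal_norm]
  have hI0 : 0 ≤ I := integral_nonneg fun _ => norm_nonneg _
  have m4 := (ENNReal.ofReal_le_ofReal_iff hI0).1 m3
  have hx1 : x ^ (α - 1) * x ^ 2 = x ^ (α + 1) := by
    rw [← Real.rpow_natCast, ← Real.rpow_add hx]
    congr 1
    push_cast
    ring
  have hx2 : x ^ (α + 1) * (x ^ (-((α + 1) / 2))) ^ 2 = 1 := by
    rw [← Real.rpow_natCast, ← Real.rpow_mul hx.le, ← Real.rpow_add hx]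
    convert Real.rpow_zero x using 2
    push_cast
    ring
  have hpp := Real.rpow_pos_of_pos hx (-((α + 1) / 2))
  refine (sq_le_sq₀ (norm_nonneg _) (by positivity)).1 ?_
  rw [mul_pow, Real.sq_sqrt (by positivity)]
  have m5 : x ^ (α + 1) * ‖f z‖ ^ 2 ≤ 16 / (Real.pi * δ ^ 2) * I := by
    rw [div_mul_eq_mul_div, le_div_iff₀ (by positivity)]
    rw [← hx1]
    linarith
  calc ‖f z‖ ^ 2 = (x ^ (α + 1) * ‖f z‖ ^ 2) * (x ^ (-((α + 1) / 2))) ^ 2 := by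
        linear_combination (-‖f z‖ ^ 2) * hx2
    _ ≤ _ := by gcongr

theorem stmt19_aux (α : ℝ) (j : ℕ) (f : ℂ → ℂ) (hf : DifferentiableOn ℂ f (sector α))
    (hfint : IntegrableOn (fun z => ‖f z‖ ^ 2 * wt α z) (sector α)) (δ : ℝ) (hδ0 : 0 < δ)
    (hδ : δ < 1)
    (hb : ∀ x : ℝ, 0 < x → ∀ z ∈ Metric.ball (x : ℂ) (δ * x),
      z ∈ sector α ∧ x ^ (α - 1) / 2 ≤ wt α z)
    (l : Filter ℝ) [l.IsCountablyGenerated] (hl0 : ∀ᶠ x in l, 0 < x)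
    (hl : ∀ a : ℝ, 0 < a → ∀ᶠ x in l, a ≤ (1 - δ) * x ∨ (1 + δ) * x ≤ a) :
    Tendsto (fun x : ℝ => ((x ^ ((j : ℝ) + (α + 1) / 2) : ℝ) : ℂ) *
        iteratedDeriv j f (x : ℂ)) l (nhds 0) := by
  have ht := key_tendsto _ _ δ hδ hδ0 (fun x hx z hz => (hb x hx z hz).1) hfint l hl0 hl
  have ht2 := ((ht.const_mul (16 / (Real.pi * δ ^ 2))).sqrt).const_mul (j.factorial * (2 / δ) ^ j)
  rw [mul_zero, Real.sqrt_zero, mul_zero] at ht2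
  refine squeeze_zero_norm' ?_ ht2
  filter_upwards [hl0] with x hx
  have hd : DiffContOnCl ℂ f (Metric.ball (x : ℂ) (δ * x / 2)) := by
    apply DifferentiableOn.diffContOnCl
    rw [closure_ball _ (by positivity)]
    refine hf.mono fun z hz => (hb x hx z (Metric.closedBall_subset_ball ?_ hz)).1
    have : 0 < δ * x := by positivity
    linarith
  have hc := Complex.norm_iteratedDeriv_le_of_forall_mem_sphere_norm_le j (by positivity) hd
    (key_bound α f hf hfint δ hδ0 x hx (hb x hx))
  have hpos := Real.rpow_pos_of_pos hx ((j : ℝ) + (α + 1) / 2)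
  rw [norm_mul, Complex.norm_real, Real.norm_of_nonneg hpos.le]
  refine (mul_le_mul_of_nonneg_left hc hpos.le).trans (le_of_eq ?_)
  rw [Real.rpow_add hx, Real.rpow_natCast, Real.rpow_neg hx.le]
  have := Real.rpow_pos_of_pos hx ((α + 1) / 2)
  have hj : x ^ j = (δ * x / 2) ^ j * (2 / δ) ^ j := by
    rw [← mul_pow]
    congr 1
    field_simp
  rw [hj]
  field_simp

theorem stmt19 (α : ℝ) (hα : 0 < α) (hα2 : α ≤ 2) (j : ℕ)
    (f : ℂ → ℂ) (hf : DifferentiableOn ℂ f (sector α))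
    (hfint : IntegrableOn
      (fun z => ‖f z‖ ^ 2 * ((z ^ (((2 / α : ℝ)) : ℂ)).re) ^ (α - 1) *
        ‖z‖ ^ ((α - 2) * (α - 1) / α)) (sector α)) :
    Tendsto (fun x : ℝ => ((x ^ ((j : ℝ) + (α + 1) / 2) : ℝ) : ℂ) *
        iteratedDeriv j f (x : ℂ)) atTop (nhds 0) ∧
    Tendsto (fun x : ℝ => ((x ^ ((j : ℝ) + (α + 1) / 2) : ℝ) : ℂ) *
        iteratedDeriv j f (x : ℂ)) (nhdsWithin 0 (Set.Ioi 0)) (nhds 0) := by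
  obtain ⟨δ, hδ0, hδ, hb⟩ := exists_delta α hα
  have hfint' : IntegrableOn (fun z => ‖f z‖ ^ 2 * wt α z) (sector α) := by
    simpa only [wt, mul_assoc] using hfint
  constructor
  · refine stmt19_aux α j f hf hfint' δ hδ0 hδ hb _ (eventually_gt_atTop 0) ?_
    intro a ha
    filter_upwards [eventually_ge_atTop (a / (1 - δ))] with x hx
    left
    rw [div_le_iff₀ (by linarith)] at hx
    linarith
  · refine stmt19_aux α j f hf hfint' δ hδ0 hδ hb _ self_mem_nhdsWithin ?_
    intro a ha
    have : ∀ᶠ x : ℝ in nhds 0, x < a / (1 + δ) := gt_mem_nhds (by positivity)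
    filter_upwards [nhdsWithin_le_nhds this] with x hx
    right
    rw [lt_div_iff₀ (by linarith)] at hx
    linarith
end
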